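/- Fix k ∈ ℕ. Then limsup_{m→∞} D_{ℝ,m}(2^k)^{1/m} ≥ 2^{1−2^{−k}}. -/

import Mathlib

open MvPolynomial Filter

/-- The sup norm of a real polynomial in `n` variables over the cube `[-1,1]^n`. -/
noncomputable def supNorm {n : ℕ} (P : MvPolynomial (Fin n) ℝ) : ℝ :=
  sSup {y : ℝ | ∃ x : Fin n → ℝ, (∀ i, |x i| ≤ 1) ∧ y = |eval x P|}

/-- The `ℓ_p` norm of the coefficients of a real polynomial. -/
noncomputable def lpNorm {n : ℕ} (p : ℝ) (P : MvPolynomial (Fin n) ℝ) : ℝ :=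
  (∑ α ∈ P.support, |coeff α P| ^ p) ^ (1 / p)

/-- The real polynomial Bohnenblust–Hille constant `D_{ℝ,m}`. -/
noncomputable def BHconst (m : ℕ) : ℝ :=
  sInf {D : ℝ | 0 < D ∧ ∀ (n : ℕ) (P : MvPolynomial (Fin n) ℝ),
    P.IsHomogeneous m → lpNorm (2 * m / (m + 1)) P ≤ D * supNorm P}

/-- The real polynomial Bohnenblust–Hille constant `D_{ℝ,m}(n)` in a fixed number `n`
of variables. -/
noncomputable def BHconstN (m n : ℕ) : ℝ :=
  sInf {D : ℝ | 0 < D ∧ ∀ P : MvPolynomial (Fin n) ℝ,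
    P.IsHomogeneous m → lpNorm (2 * m / (m + 1)) P ≤ D * supNorm P}

/-!
Starting from a single variable, `Q₀ = x` and `Qₖ₊₁(x, y) = Qₖ(x)² - Qₖ(y)²` is a `2ᵏ`-homogeneous
polynomial in `2ᵏ` variables. On the real cube both squares lie in `[0, 1]`, so `|Qₖ| ≤ 1`; on the
complex torus the two squares can be given opposite phases, so `|Qₖ|` doubles at every squaring step
and reaches `2 ^ (2ᵏ - 1)`. A homogeneous polynomial of degree `m` in a fixed number of variables
has only polynomially many (in `m`) coefficients, so its modulus on the torus is at most a
polynomial factor times its `ℓ_p` coefficient norm. Applied to the powers of `Qₖ`, and after taking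
`m`-th roots, this gives the bound `(2 ^ (2ᵏ - 1)) ^ (1 / 2ᵏ)`.

The real `limsup` and infimum are meaningful only because the constants are finite and grow at most
exponentially in `m`; this follows from an exponential bound on the coefficients of a polynomial in
terms of its sup norm on the cube, obtained variable by variable from the extremal property of the
Chebyshev polynomials.
-/

section CoefficientNorms

variable {σ : Type*} {m n : ℕ} {p : ℝ}

theorem card_support_le_of_degreeOf_le [Fintype σ] {R : Type*} [CommSemiring R]
    {P : MvPolynomial σ R} (hP : ∀ i, P.degreeOf i ≤ m) :
    P.support.card ≤ (m + 1) ^ Fintype.card σ := by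
  classical
  calc P.support.card
      ≤ (Fintype.piFinset fun _ : σ => Finset.range (m + 1)).card := by
        refine Finset.card_le_card_of_injOn (fun α => ⇑α) (fun α hα => ?_)
          DFunLike.coe_injective.injOn
        exact Fintype.mem_piFinset.2 fun i =>
          Finset.mem_range_succ_iff.2 ((monomial_le_degreeOf i hα).trans (hP i))
    _ = (m + 1) ^ Fintype.card σ := by simp

theorem degreeOf_le_of_isHomogeneous {R : Type*} [CommSemiring R] {P : MvPolynomial σ R}
    (hP : P.IsHomogeneous m) (i : σ) : P.degreeOf i ≤ m :=
  (degreeOf_le_totalDegree P i).trans hP.totalDegree_le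

theorem norm_aeval_le_sum_abs_coeff {A : Type*} [NormedField A] [NormedAlgebra ℝ A]
    (P : MvPolynomial σ ℝ) {z : σ → A} (hz : ∀ i, ‖z i‖ ≤ 1) :
    ‖aeval z P‖ ≤ ∑ α ∈ P.support, |coeff α P| := by
  rw [aeval_def, eval₂_eq]
  refine (norm_sum_le _ _).trans (Finset.sum_le_sum fun α _ => ?_)
  rw [norm_mul, norm_algebraMap', norm_prod, Real.norm_eq_abs]
  refine mul_le_of_le_one_right (abs_nonneg _)
    (Finset.prod_le_one (fun _ _ => norm_nonneg _) fun i _ => ?_)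
  rw [norm_pow]
  exact pow_le_one₀ (norm_nonneg _) (hz i)

theorem lpNorm_nonneg (p : ℝ) (P : MvPolynomial (Fin n) ℝ) : 0 ≤ lpNorm p P := by
  unfold lpNorm
  positivity

theorem abs_coeff_le_lpNorm (hp : 0 < p) {P : MvPolynomial (Fin n) ℝ} {α : Fin n →₀ ℕ}
    (hα : α ∈ P.support) : |coeff α P| ≤ lpNorm p P :=
  calc |coeff α P| = (|coeff α P| ^ p) ^ (1 / p) := by
        rw [one_div, Real.rpow_rpow_inv (abs_nonneg _) hp.ne']
    _ ≤ lpNorm p P := by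
        unfold lpNorm
        gcongr
        exact Finset.single_le_sum (f := fun α => |coeff α P| ^ p) (fun _ _ => by positivity) hα

theorem lpNorm_le_card_support_mul (hp : 1 ≤ p) {P : MvPolynomial (Fin n) ℝ} {B : ℝ}
    (hB : 0 ≤ B) (hcoeff : ∀ α, |coeff α P| ≤ B) : lpNorm p P ≤ P.support.card * B := by
  have hp₀ : 0 < p := one_pos.trans_le hp
  have hcard : (P.support.card : ℝ) ≤ (P.support.card : ℝ) ^ p := by
    rcases Nat.eq_zero_or_pos P.support.card with h | h
    · simp [h, hp₀.ne']
    · exact Real.self_le_rpow_of_one_le (mod_cast h) hp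
  calc lpNorm p P ≤ ((P.support.card * B) ^ p) ^ (1 / p) := by
        unfold lpNorm
        gcongr
        calc ∑ α ∈ P.support, |coeff α P| ^ p ≤ ∑ _α ∈ P.support, B ^ p := by
              gcongr with α
              exact hcoeff α
          _ = P.support.card * B ^ p := by rw [Finset.sum_const, nsmul_eq_mul]
          _ ≤ (P.support.card * B) ^ p := by
              rw [Real.mul_rpow (Nat.cast_nonneg _) hB]
              gcongr
    _ = P.support.card * B := by
        rw [one_div, Real.rpow_rpow_inv (by positivity) hp₀.ne']

theorem norm_aeval_le_pow_mul_lpNorm {A : Type*} [NormedField A] [NormedAlgebra ℝ A] (hp : 0 < p)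
    {P : MvPolynomial (Fin n) ℝ} (hP : ∀ i, P.degreeOf i ≤ m) {z : Fin n → A}
    (hz : ∀ i, ‖z i‖ ≤ 1) : ‖aeval z P‖ ≤ ((m : ℝ) + 1) ^ n * lpNorm p P :=
  calc ‖aeval z P‖ ≤ ∑ α ∈ P.support, |coeff α P| := norm_aeval_le_sum_abs_coeff P hz
    _ ≤ ∑ _α ∈ P.support, lpNorm p P := Finset.sum_le_sum fun _ => abs_coeff_le_lpNorm hp
    _ = P.support.card * lpNorm p P := by rw [Finset.sum_const, nsmul_eq_mul]
    _ ≤ ((m : ℝ) + 1) ^ n * lpNorm p P := by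
        gcongr
        · exact lpNorm_nonneg p P
        · exact_mod_cast Fintype.card_fin n ▸ card_support_le_of_degreeOf_le hP

end CoefficientNorms

section SupNorm

variable {n : ℕ}

theorem supNorm_nonneg (P : MvPolynomial (Fin n) ℝ) : 0 ≤ supNorm P := by
  apply Real.sSup_nonneg
  rintro y ⟨x, -, rfl⟩
  exact abs_nonneg _

theorem supNorm_le {P : MvPolynomial (Fin n) ℝ} {M : ℝ} (hM : 0 ≤ M)
    (h : ∀ x : Fin n → ℝ, (∀ i, |x i| ≤ 1) → |eval x P| ≤ M) : supNorm P ≤ M := by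
  apply Real.sSup_le _ hM
  rintro y ⟨x, hx, rfl⟩
  exact h x hx

theorem abs_eval_le_supNorm (P : MvPolynomial (Fin n) ℝ) {x : Fin n → ℝ} (hx : ∀ i, |x i| ≤ 1) :
    |eval x P| ≤ supNorm P := by
  refine le_csSup ⟨∑ α ∈ P.support, |coeff α P|, ?_⟩ ⟨x, hx, rfl⟩
  rintro y ⟨x, hx, rfl⟩
  exact norm_aeval_le_sum_abs_coeff (A := ℝ) P hx

theorem supNorm_pow_le (P : MvPolynomial (Fin n) ℝ) (N : ℕ) : supNorm (P ^ N) ≤ supNorm P ^ N := by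
  refine supNorm_le (pow_nonneg (supNorm_nonneg P) N) fun x hx => ?_
  rw [map_pow, abs_pow]
  gcongr
  exact abs_eval_le_supNorm P hx

end SupNorm

section CoefficientBound

open Polynomial.Chebyshev

variable {n : ℕ}

theorem taylor_one_coeff_le_taylor_one_T_coeff {q : Polynomial ℝ} (hq : q.degree ≤ n)
    (hbound : ∀ x ∈ Set.Icc (-1) 1, |q.eval x| ≤ 1) (j : ℕ) :
    (q.taylor 1).coeff j ≤ ((T ℝ n).taylor 1).coeff j := by
  have h := eval_iterate_derivative_le_of_forall_abs_le_one (k := j) le_rfl hq hbound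
  rw [← Polynomial.factorial_smul_hasseDeriv, LinearMap.smul_apply, LinearMap.smul_apply,
    Polynomial.eval_smul, Polynomial.eval_smul, nsmul_eq_mul, nsmul_eq_mul] at h
  rw [Polynomial.taylor_coeff, Polynomial.taylor_coeff]
  exact le_of_mul_le_mul_left h (by positivity)

theorem taylor_one_T_coeff_nonneg (n j : ℕ) : 0 ≤ ((T ℝ n).taylor 1).coeff j := by
  simpa using taylor_one_coeff_le_taylor_one_T_coeff (n := n) (q := 0) (by simp) (by simp) j

theorem two_pow_mul_taylor_one_T_coeff_le (n j : ℕ) :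
    2 ^ j * ((T ℝ n).taylor 1).coeff j ≤ (T ℝ n).eval 3 := by
  rcases le_or_gt j n with hj | hj
  · have hdeg : ((T ℝ n).taylor 1).natDegree < n + 1 := by simp
    calc 2 ^ j * ((T ℝ n).taylor 1).coeff j
        ≤ ∑ i ∈ Finset.range (n + 1), ((T ℝ n).taylor 1).coeff i * 2 ^ i := by
          rw [mul_comm]
          exact Finset.single_le_sum (f := fun i => ((T ℝ n).taylor 1).coeff i * 2 ^ i)
            (fun i _ => mul_nonneg (taylor_one_T_coeff_nonneg n i) (by positivity))
            (Finset.mem_range_succ_iff.2 hj)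
      _ = (T ℝ n).eval 3 := by
          rw [← Polynomial.eval_eq_sum_range' hdeg, Polynomial.taylor_eval]
          norm_num
  · rw [Polynomial.coeff_eq_zero_of_natDegree_lt (by simpa using hj), mul_zero]
    exact zero_le_one.trans (one_le_eval_T_real _ (by norm_num))

theorem eval_T_le_two_mul_pow {x : ℝ} (hx : 1 ≤ x) (n : ℕ) : (T ℝ n).eval x ≤ (2 * x) ^ n := by
  induction n with
  | zero => simp
  | succ n ih =>
    have hrec : (T ℝ (n + 1 : ℕ)).eval x = 2 * x * (T ℝ n).eval x - (T ℝ (n - 1)).eval x := by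
      simp [T_add_one]
    have hone : 1 ≤ (T ℝ (n - 1)).eval x := one_le_eval_T_real _ hx
    rw [hrec, pow_succ']
    have : 2 * x * (T ℝ n).eval x ≤ 2 * x * (2 * x) ^ n := by gcongr
    linarith

theorem abs_taylor_one_coeff_le_taylor_one_T_coeff {q : Polynomial ℝ} (hq : q.degree ≤ n)
    (hbound : ∀ x ∈ Set.Icc (-1) 1, |q.eval x| ≤ 1) (j : ℕ) :
    |(q.taylor 1).coeff j| ≤ ((T ℝ n).taylor 1).coeff j := by
  refine abs_le'.2 ⟨taylor_one_coeff_le_taylor_one_T_coeff hq hbound j, ?_⟩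
  simpa using taylor_one_coeff_le_taylor_one_T_coeff (q := -q) (by simpa using hq)
    (by simpa using hbound) j

theorem abs_polynomial_coeff_le_six_pow {p : Polynomial ℝ} (hp : p.degree ≤ n)
    (hbound : ∀ x, |x| ≤ 1 → |p.eval x| ≤ 1) (j : ℕ) : |p.coeff j| ≤ 6 ^ n := by
  -- This substitution moves the coefficients at `0` to the endpoint `1` of `[-1, 1]`, where they
  -- are dominated by those of the Chebyshev polynomial.
  set q := p.comp (Polynomial.C 2⁻¹ * (Polynomial.X - 1)) with hq
  have hq_degree : q.degree ≤ n := by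
    refine Polynomial.degree_le_of_natDegree_le ?_
    have hp_natDegree := Polynomial.natDegree_le_of_degree_le hp
    grw [hq, Polynomial.natDegree_comp_le, Polynomial.natDegree_C_mul_le]
    rw [← Polynomial.C_1, Polynomial.natDegree_X_sub_C, mul_one]
    exact hp_natDegree
  have hq_bound : ∀ y ∈ Set.Icc (-1) 1, |q.eval y| ≤ 1 := fun y hy => by
    simp only [hq, Polynomial.eval_comp, Polynomial.eval_mul, Polynomial.eval_C,
      Polynomial.eval_sub, Polynomial.eval_X, Polynomial.eval_one]
    exact hbound _ (abs_le.2 ⟨by linarith [hy.1], by linarith [hy.2]⟩)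
  have hq_coeff : (q.taylor 1).coeff j = p.coeff j * 2⁻¹ ^ j := by
    simp [hq, Polynomial.taylor_apply, Polynomial.comp_assoc]
  calc |p.coeff j| = 2 ^ j * |(q.taylor 1).coeff j| := by
        rw [hq_coeff, abs_mul, abs_of_pos (by positivity : (0 : ℝ) < 2⁻¹ ^ j), inv_pow]
        field_simp
    _ ≤ 2 ^ j * ((T ℝ n).taylor 1).coeff j := by
        gcongr
        exact abs_taylor_one_coeff_le_taylor_one_T_coeff hq_degree hq_bound j
    _ ≤ (T ℝ n).eval 3 := two_pow_mul_taylor_one_T_coeff_le n j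
    _ ≤ (2 * 3) ^ n := eval_T_le_two_mul_pow (by norm_num) n
    _ = 6 ^ n := by norm_num

theorem abs_polynomial_coeff_le {p : Polynomial ℝ} {M : ℝ} (hp : p.degree ≤ n)
    (hbound : ∀ x, |x| ≤ 1 → |p.eval x| ≤ M) (j : ℕ) : |p.coeff j| ≤ 6 ^ n * M := by
  have hM : 0 ≤ M := (abs_nonneg _).trans (hbound 0 (by simp))
  rw [← div_le_iff₀' (by positivity)]
  refine le_of_forall_gt_imp_ge_of_dense fun M' hM' => ?_
  have hM'pos : 0 < M' := hM.trans_lt hM'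
  have h := abs_polynomial_coeff_le_six_pow (p := M'⁻¹ • p)
    ((Polynomial.degree_smul_le _ _).trans hp) (fun x hx => ?_) j
  · rwa [Polynomial.coeff_smul, smul_eq_mul, abs_mul, abs_of_pos (inv_pos.2 hM'pos),
      inv_mul_le_iff₀ hM'pos, mul_comm, ← div_le_iff₀' (by positivity)] at h
  · rw [Polynomial.eval_smul, smul_eq_mul, abs_mul, abs_of_pos (inv_pos.2 hM'pos),
      inv_mul_le_one₀ hM'pos]
    exact (hbound x hx).trans hM'.le

theorem abs_coeff_le_of_degreeOf_le {m : ℕ} {M : ℝ} {P : MvPolynomial (Fin n) ℝ}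
    (hP : ∀ i, P.degreeOf i ≤ m) (hbound : ∀ x : Fin n → ℝ, (∀ i, |x i| ≤ 1) → |eval x P| ≤ M)
    (α : Fin n →₀ ℕ) : |coeff α P| ≤ (6 ^ m) ^ n * M := by
  induction n generalizing M with
  | zero =>
    obtain ⟨a, rfl⟩ := C_surjective (Fin 0) P
    simpa [Subsingleton.elim α 0] using hbound 0 fun i => i.elim0
  | succ n ih =>
    rw [← Finsupp.cons_tail α, ← finSuccEquiv_coeff_coeff, pow_succ, mul_assoc]
    refine ih (fun i => (degreeOf_coeff_finSuccEquiv P i _).trans (hP _)) (fun x hx => ?_) _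
    rw [← Polynomial.coeff_map]
    refine abs_polynomial_coeff_le ?_ (fun y hy => ?_) _
    · refine Polynomial.degree_map_le.trans (Polynomial.degree_le_of_natDegree_le ?_)
      rw [natDegree_finSuccEquiv]
      exact hP 0
    · rw [← eval_eq_eval_mv_eval']
      exact hbound _ (Fin.cases hy hx)

end CoefficientBound

section BohnenblustHille

variable {m n : ℕ}

theorem one_le_BH_exponent (hm : m ≠ 0) : 1 ≤ (2 * m / (m + 1) : ℝ) := by
  have : (1 : ℝ) ≤ m := mod_cast Nat.one_le_iff_ne_zero.2 hm
  rw [le_div_iff₀ (by positivity)]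
  linarith

theorem lpNorm_le_pow_mul_supNorm {p : ℝ} (hp : 1 ≤ p) {P : MvPolynomial (Fin n) ℝ}
    (hP : ∀ i, P.degreeOf i ≤ m) : lpNorm p P ≤ ((m + 1) * 6 ^ m) ^ n * supNorm P := by
  have hcoeff : ∀ α, |coeff α P| ≤ (6 ^ m) ^ n * supNorm P :=
    abs_coeff_le_of_degreeOf_le hP fun _ => abs_eval_le_supNorm P
  have hnonneg : 0 ≤ (6 ^ m) ^ n * supNorm P := mul_nonneg (by positivity) (supNorm_nonneg P)
  calc lpNorm p P ≤ P.support.card * ((6 ^ m) ^ n * supNorm P) :=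
        lpNorm_le_card_support_mul hp hnonneg hcoeff
    _ ≤ ((m : ℝ) + 1) ^ n * ((6 ^ m) ^ n * supNorm P) := by
        gcongr
        exact_mod_cast Fintype.card_fin n ▸ card_support_le_of_degreeOf_le hP
    _ = ((m + 1) * 6 ^ m) ^ n * supNorm P := by rw [mul_pow, mul_assoc]

theorem BHconstN_nonneg (m n : ℕ) : 0 ≤ BHconstN m n := Real.sInf_nonneg fun _ hD => hD.1.le

theorem pow_mem_BH_bounds (hm : m ≠ 0) (n : ℕ) :
    ((m + 1) * 6 ^ m : ℝ) ^ n ∈ {D : ℝ | 0 < D ∧ ∀ P : MvPolynomial (Fin n) ℝ,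
      P.IsHomogeneous m → lpNorm (2 * m / (m + 1)) P ≤ D * supNorm P} :=
  ⟨by positivity, fun _ hP => lpNorm_le_pow_mul_supNorm (one_le_BH_exponent hm)
    (degreeOf_le_of_isHomogeneous hP)⟩

theorem BHconstN_le (hm : m ≠ 0) (n : ℕ) : BHconstN m n ≤ ((m + 1) * 6 ^ m) ^ n :=
  csInf_le ⟨0, fun _ hD => hD.1.le⟩ (pow_mem_BH_bounds hm n)

theorem lpNorm_le_BHconstN_mul_supNorm (hm : m ≠ 0) {P : MvPolynomial (Fin n) ℝ}
    (hP : P.IsHomogeneous m) : lpNorm (2 * m / (m + 1)) P ≤ BHconstN m n * supNorm P := by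
  rcases (supNorm_nonneg P).eq_or_lt with hzero | hpos
  · simpa [← hzero] using (pow_mem_BH_bounds hm n).2 P hP
  · rw [← div_le_iff₀ hpos]
    exact le_csInf ⟨_, pow_mem_BH_bounds hm n⟩ fun D hD => (div_le_iff₀ hpos).2 (hD.2 P hP)

theorem BHconstN_rpow_inv_le (hm : m ≠ 0) (n : ℕ) : BHconstN m n ^ (m : ℝ)⁻¹ ≤ 12 ^ n := by
  have hsucc : (m : ℝ) + 1 ≤ 2 ^ m := mod_cast Nat.lt_two_pow_self
  refine (Real.rpow_inv_le_iff_of_pos (BHconstN_nonneg m n) (by positivity) (by positivity)).2 ?_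
  calc BHconstN m n ≤ ((m + 1) * 6 ^ m) ^ n := BHconstN_le hm n
    _ ≤ (2 ^ m * 6 ^ m) ^ n := by gcongr
    _ = ((12 : ℝ) ^ n) ^ (m : ℝ) := by
        rw [← mul_pow, Real.rpow_natCast, pow_right_comm]
        norm_num

theorem norm_aeval_le_pow_mul_BHconstN_mul_supNorm {A : Type*} [NormedField A]
    [NormedAlgebra ℝ A] (hm : m ≠ 0) {P : MvPolynomial (Fin n) ℝ} (hP : P.IsHomogeneous m)
    {z : Fin n → A} (hz : ∀ i, ‖z i‖ ≤ 1) :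
    ‖aeval z P‖ ≤ ((m : ℝ) + 1) ^ n * (BHconstN m n * supNorm P) :=
  calc ‖aeval z P‖ ≤ ((m : ℝ) + 1) ^ n * lpNorm (2 * m / (m + 1)) P :=
        norm_aeval_le_pow_mul_lpNorm (one_pos.trans_le (one_le_BH_exponent hm))
          (degreeOf_le_of_isHomogeneous hP) hz
    _ ≤ ((m : ℝ) + 1) ^ n * (BHconstN m n * supNorm P) := by
        gcongr
        exact lpNorm_le_BHconstN_mul_supNorm hm hP

theorem tendsto_natCast_add_one_pow_rpow_inv (n : ℕ) :
    Tendsto (fun m : ℕ => (((m : ℝ) + 1) ^ n) ^ (m : ℝ)⁻¹) atTop (nhds 1) := by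
  have h : Tendsto (fun m : ℕ => ((m : ℝ) + 1) ^ (m : ℝ)⁻¹) atTop (nhds 1) := by
    refine ((tendsto_rpow_div_mul_add 1 1 (-1) (by norm_num)).comp
      (tendsto_atTop_add_const_right atTop (1 : ℝ) tendsto_natCast_atTop_atTop)).congr fun m => ?_
    simp
  simpa only [one_pow, ← Real.rpow_pow_comm (Nat.cast_add_one_pos _).le] using h.pow n

theorem norm_aeval_rpow_inv_div_le_BHconstN_rpow_inv {A : Type*} [NormedField A] [NormedAlgebra ℝ A]
    {d N : ℕ} (hd : d ≠ 0) (hN : N ≠ 0) {Q : MvPolynomial (Fin n) ℝ} (hQ : Q.IsHomogeneous d)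
    (hsup : supNorm Q ≤ 1) {z : Fin n → A} (hz : ∀ i, ‖z i‖ ≤ 1) :
    ‖aeval z Q‖ ^ (d : ℝ)⁻¹ / ((((d * N : ℕ) : ℝ) + 1) ^ n) ^ ((d * N : ℕ) : ℝ)⁻¹ ≤
      BHconstN (d * N) n ^ ((d * N : ℕ) : ℝ)⁻¹ := by
  have hpow : ‖aeval z Q‖ ^ N ≤ (((d * N : ℕ) : ℝ) + 1) ^ n * BHconstN (d * N) n :=
    calc ‖aeval z Q‖ ^ N = ‖aeval z (Q ^ N)‖ := by rw [map_pow, norm_pow]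
      _ ≤ (((d * N : ℕ) : ℝ) + 1) ^ n * (BHconstN (d * N) n * supNorm (Q ^ N)) :=
          norm_aeval_le_pow_mul_BHconstN_mul_supNorm (mul_ne_zero hd hN) (hQ.pow N) hz
      _ ≤ (((d * N : ℕ) : ℝ) + 1) ^ n * BHconstN (d * N) n := by
          gcongr
          refine mul_le_of_le_one_right (BHconstN_nonneg _ _) ((supNorm_pow_le Q N).trans ?_)
          exact pow_le_one₀ (supNorm_nonneg Q) hsup
  rw [div_le_iff₀' (by positivity), ← Real.mul_rpow (by positivity) (BHconstN_nonneg _ _)]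
  calc ‖aeval z Q‖ ^ (d : ℝ)⁻¹ = (‖aeval z Q‖ ^ N) ^ ((d * N : ℕ) : ℝ)⁻¹ := by
        rw [Nat.cast_mul, mul_inv_rev, Real.rpow_mul (by positivity),
          Real.pow_rpow_inv_natCast (norm_nonneg _) hN]
    _ ≤ ((((d * N : ℕ) : ℝ) + 1) ^ n * BHconstN (d * N) n) ^ ((d * N : ℕ) : ℝ)⁻¹ := by gcongr

theorem norm_aeval_rpow_inv_le_limsup_BHconstN {A : Type*} [NormedField A] [NormedAlgebra ℝ A]
    {d : ℕ} (hd : d ≠ 0) {Q : MvPolynomial (Fin n) ℝ} (hQ : Q.IsHomogeneous d)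
    (hsup : supNorm Q ≤ 1) {z : Fin n → A} (hz : ∀ i, ‖z i‖ ≤ 1) :
    ‖aeval z Q‖ ^ (d : ℝ)⁻¹ ≤ limsup (fun m : ℕ => BHconstN m n ^ (m : ℝ)⁻¹) atTop := by
  have hlim : Tendsto (fun m : ℕ => ‖aeval z Q‖ ^ (d : ℝ)⁻¹ / (((m : ℝ) + 1) ^ n) ^ (m : ℝ)⁻¹)
      atTop (nhds (‖aeval z Q‖ ^ (d : ℝ)⁻¹)) := by
    simpa only [div_one, Pi.div_def] using
      tendsto_const_nhds.div (tendsto_natCast_add_one_pow_rpow_inv n) one_ne_zero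
  have hmultiples : Tendsto (fun N : ℕ => d * N) atTop atTop :=
    tendsto_id.const_mul_atTop' (Nat.pos_of_ne_zero hd)
  have hbdd : IsBoundedUnder (· ≤ ·) atTop fun m : ℕ => BHconstN m n ^ (m : ℝ)⁻¹ :=
    isBoundedUnder_of_eventually_le <|
      (eventually_ne_atTop 0).mono fun m hm => BHconstN_rpow_inv_le hm n
  rw [← hlim.liminf_eq]
  refine liminf_le_limsup_of_frequently_le (hmultiples.frequently ?_) hlim.isBoundedUnder_ge hbdd
  exact ((eventually_ne_atTop 0).mono fun N hN =>
    norm_aeval_rpow_inv_div_le_BHconstN_rpow_inv hd hN hQ hsup hz).frequently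

end BohnenblustHille

section IteratedSquareDiff

/-- The two halves of `2 ^ (k + 1)` variables, as two copies of `2 ^ k` variables. -/
def finTwoPowSumEquiv (k : ℕ) : Fin (2 ^ k) ⊕ Fin (2 ^ k) ≃ Fin (2 ^ (k + 1)) :=
  finSumFinEquiv.trans (finCongr (by rw [pow_succ, mul_two]))

/-- The extremal polynomials `Q₀ = x` and `Qₖ₊₁(x, y) = Qₖ(x)² - Qₖ(y)²`, where `x` and `y` are
the two halves of the variables of `Qₖ₊₁`. -/
noncomputable def iteratedSquareDiff : (k : ℕ) → MvPolynomial (Fin (2 ^ k)) ℝ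
  | 0 => X 0
  | k + 1 => rename (finTwoPowSumEquiv k ∘ Sum.inl) (iteratedSquareDiff k) ^ 2 -
      rename (finTwoPowSumEquiv k ∘ Sum.inr) (iteratedSquareDiff k) ^ 2

theorem isHomogeneous_iteratedSquareDiff (k : ℕ) :
    (iteratedSquareDiff k).IsHomogeneous (2 ^ k) := by
  induction k with
  | zero => exact isHomogeneous_X ℝ 0
  | succ k ih =>
    have hsub := (ih.rename_isHomogeneous (f := finTwoPowSumEquiv k ∘ Sum.inl)).pow 2 |>.sub
      ((ih.rename_isHomogeneous (f := finTwoPowSumEquiv k ∘ Sum.inr)).pow 2)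
    rwa [← pow_succ] at hsub

theorem abs_eval_iteratedSquareDiff_le_one (k : ℕ) {x : Fin (2 ^ k) → ℝ} (hx : ∀ i, |x i| ≤ 1) :
    |eval x (iteratedSquareDiff k)| ≤ 1 := by
  induction k with
  | zero => simpa [iteratedSquareDiff] using hx 0
  | succ k ih =>
    simp only [iteratedSquareDiff, map_sub, map_pow, eval_rename]
    exact abs_sub_le_of_nonneg_of_le
      (sq_nonneg _) ((sq_le_one_iff_abs_le_one _).2 (ih fun _ => hx _))
      (sq_nonneg _) ((sq_le_one_iff_abs_le_one _).2 (ih fun _ => hx _))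

theorem supNorm_iteratedSquareDiff_le_one (k : ℕ) : supNorm (iteratedSquareDiff k) ≤ 1 :=
  supNorm_le zero_le_one fun _ => abs_eval_iteratedSquareDiff_le_one k

theorem exists_norm_eq_one_and_sq_eq {w : ℂ} (hw : ‖w‖ = 1) : ∃ u : ℂ, ‖u‖ = 1 ∧ u ^ 2 = w := by
  obtain ⟨u, rfl⟩ := IsAlgClosed.exists_pow_nat_eq w two_pos
  rw [norm_pow] at hw
  exact ⟨u, (pow_eq_one_iff_of_nonneg (norm_nonneg _) two_ne_zero).1 hw, rfl⟩

-- The value is reached with an arbitrary phase `w`, so that in the next step the two squares can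
-- be made to add up.
theorem exists_aeval_iteratedSquareDiff_eq (k : ℕ) {w : ℂ} (hw : ‖w‖ = 1) :
    ∃ z : Fin (2 ^ k) → ℂ, (∀ i, ‖z i‖ = 1) ∧
      aeval z (iteratedSquareDiff k) = w * 2 ^ (2 ^ k - 1) := by
  induction k generalizing w with
  | zero => exact ⟨fun _ => w, fun _ => hw, by simp [iteratedSquareDiff]⟩
  | succ k ih =>
    obtain ⟨u, hu, hu_sq⟩ := exists_norm_eq_one_and_sq_eq hw
    obtain ⟨v, hv, hv_sq⟩ := exists_norm_eq_one_and_sq_eq (w := -w) (by rwa [norm_neg])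
    obtain ⟨x, hx, hx_eval⟩ := ih hu
    obtain ⟨y, hy, hy_eval⟩ := ih hv
    refine ⟨Sum.elim x y ∘ (finTwoPowSumEquiv k).symm, fun i => ?_, ?_⟩
    · obtain ⟨j | j, rfl⟩ := (finTwoPowSumEquiv k).surjective i
      · simpa using hx j
      · simpa using hy j
    · have hexp : 2 ^ (k + 1) - 1 = (2 ^ k - 1) * 2 + 1 := by
        have := Nat.one_le_two_pow (n := k)
        omega
      have hleft : (Sum.elim x y ∘ (finTwoPowSumEquiv k).symm) ∘ finTwoPowSumEquiv k ∘ Sum.inl =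
          x := by ext; simp
      have hright : (Sum.elim x y ∘ (finTwoPowSumEquiv k).symm) ∘ finTwoPowSumEquiv k ∘ Sum.inr =
          y := by ext; simp
      simp only [iteratedSquareDiff, map_sub, map_pow, aeval_rename, hleft, hright, hx_eval,
        hy_eval, mul_pow, hu_sq, hv_sq, hexp]
      ring

end IteratedSquareDiff

/-- For fixed `k ∈ ℕ`, `limsup_{m→∞} D_{ℝ,m}(2^k)^{1/m} ≥ 2^{1 - 2^{-k}}`. -/
theorem real_BH_limsup_fixed_dim_pow_two (k : ℕ) :
    (2 : ℝ) ^ ((1 : ℝ) - 2 ^ (-(k : ℝ))) ≤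
      limsup (fun m : ℕ => BHconstN m (2 ^ k) ^ ((m : ℝ)⁻¹)) atTop := by
  obtain ⟨z, hz, hz_eval⟩ := exists_aeval_iteratedSquareDiff_eq k norm_one
  have hexp : (1 : ℝ) - 2 ^ (-(k : ℝ)) = (2 ^ k - 1 : ℕ) * ((2 ^ k : ℕ) : ℝ)⁻¹ := by
    rw [Real.rpow_neg two_pos.le, Real.rpow_natCast]
    push_cast [Nat.one_le_two_pow (n := k)]
    field_simp
  calc (2 : ℝ) ^ ((1 : ℝ) - 2 ^ (-(k : ℝ)))
      = ‖aeval z (iteratedSquareDiff k)‖ ^ ((2 ^ k : ℕ) : ℝ)⁻¹ := by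
        rw [hz_eval, one_mul, norm_pow, Complex.norm_ofNat, hexp, Real.rpow_mul two_pos.le,
          Real.rpow_natCast]
    _ ≤ limsup (fun m : ℕ => BHconstN m (2 ^ k) ^ ((m : ℝ)⁻¹)) atTop :=
        norm_aeval_rpow_inv_le_limsup_BHconstN (by positivity) (isHomogeneous_iteratedSquareDiff k)
          (supNorm_iteratedSquareDiff_le_one k) fun i => (hz i).le
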